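/- Let (X, W) be a left Frobenius pair in a triangulated category T. Then (X, Ŵ) is a co-t-structure on the thick triangulated subcategory Thick(X) = X̂ of T: X and Ŵ are closed under direct summands, X[-1] ⊆ X, Hom(X, Y[1]) = 0 for all X ∈ X and Y ∈ Ŵ, and every C ∈ X̂ admits distinguished triangles Y → X' → C → Y[1] and C → Y' → X'' → C[1] with X', X'' ∈ X and Y, Y' ∈ Ŵ. -/

import Mathlib

/-!
Write `X^⊥⁰` for the right orthogonal `{Z | Hom(X, Z) = 0}`. As `X[-1] ⊆ X`, the classes `X[n]`
increase with `n`, `X̂ₙ = X[n]`, and `U ∈ X^⊥` amounts to `U[1] ∈ X^⊥⁰`. Beware that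
`X.shift a = {M | M[a] ∈ X}` is the class `X[-a]`.

The `(n+1)`-fold shift of a cogenerator triangle shows that every `C ∈ X[n+1]` sits in a triangle
`M → C → W₀ → M[1]` with `M ∈ X[n]` and `W₀ ∈ W[n+1] ⊆ X^⊥⁰`. Iterating yields a morphism `X' → C`
with `X' ∈ X`, a composite of morphisms whose cones lie in `X^⊥⁰`. Its cone lies in `X^⊥⁰` as well.
This would follow from the octahedral axiom, which a pretriangulated category need not satisfy;
instead, the cone of `f` lies in `X^⊥⁰` if and only if `Hom(N, f)` is surjective and `Hom(N, f[1])`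
is injective for all `N ∈ X`, and such morphisms compose. The two approximation triangles are
rotations of the triangles on `X' → C` and `X'' → C[1]`, once `Ŵ` is identified with `X̂ ∩ X^⊥`.
-/

open CategoryTheory CategoryTheory.Limits CategoryTheory.Pretriangulated ZeroObject

universe v u

namespace FrobeniusPaperTri

variable {T : Type u} [Category.{v} T] [HasZeroObject T] [HasShift T ℤ] [Preadditive T]
  [∀ n : ℤ, (shiftFunctor T n).Additive] [Pretriangulated T]

/-- A "subcategory" of the triangulated category `T`: a full additive subcategory, regarded
as the membership predicate on objects, closed under isomorphisms and direct summands. -/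
structure IsTriSubcat (X : T → Prop) : Prop where
  zero : X 0
  iso_closed : ∀ {A B : T}, (A ≅ B) → X A → X B
  summand_closed : ∀ {A M : T} (i : A ⟶ M) (p : M ⟶ A), i ≫ p = 𝟙 A → X M → X A

/-- `TriHat X n M` : `M ∈ X̂ₙ`, i.e. there are distinguished triangles
`K_{i+1} → X_i → K_i → K_{i+1}[1]` for `0 ≤ i ≤ n-1` with `K₀ = M`, all `X_i ∈ X` and
`K_n ∈ X`. -/
def TriHat (X : T → Prop) : ℕ → T → Prop
  | 0, M => X M
  | (n + 1), M => ∃ (K E : T) (f : K ⟶ E) (g : E ⟶ M) (h : M ⟶ K⟦(1 : ℤ)⟧),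
      (Triangle.mk f g h ∈ distTriang T) ∧ X E ∧ TriHat X n K

/-- `M ∈ X̂ = ⋃ₙ X̂ₙ`. -/
def TriHatAll (X : T → Prop) (M : T) : Prop := ∃ n, TriHat X n M

/-- A left Frobenius pair `(X, W)` in the triangulated category `T`. -/
structure TriLeftFrobenius (X W : T → Prop) : Prop where
  subX : IsTriSubcat X
  subW : IsTriSubcat W
  /-- `X` is closed under extensions. -/
  extClosed : ∀ ⦃A B M : T⦄ (f : A ⟶ B) (g : B ⟶ M) (h : M ⟶ A⟦(1 : ℤ)⟧),
    (Triangle.mk f g h ∈ distTriang T) →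
    X A → X M → X B
  /-- `X` is closed under cocones of deflations. -/
  coconeClosed : ∀ ⦃A B M : T⦄ (f : A ⟶ B) (g : B ⟶ M) (h : M ⟶ A⟦(1 : ℤ)⟧),
    (Triangle.mk f g h ∈ distTriang T) →
    X B → X M → X A
  /-- `W ⊆ X`. -/
  WsubX : ∀ M, W M → X M
  /-- `W` is a cogenerator for `X`: every `M ∈ X` fits in a distinguished triangle
  `M → W₀ → X' → M[1]` with `W₀ ∈ W`, `X' ∈ X`. -/
  cogen : ∀ M, X M → ∃ (W₀ X' : T) (f : M ⟶ W₀) (g : W₀ ⟶ X') (h : X' ⟶ M⟦(1 : ℤ)⟧),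
    (Triangle.mk f g h ∈ distTriang T) ∧ W W₀ ∧ X X'
  /-- `W ⊆ X^⊥`: `Hom(M, N[i]) = 0` for `i ≥ 1`, `M ∈ X`, `N ∈ W`. -/
  perp : ∀ M N, X M → W N → ∀ i : ℤ, 1 ≤ i → ∀ f : M ⟶ N⟦i⟧, f = 0

/-- A thick (strictly full) triangulated subcategory of `T`, closed under direct summands. -/
structure IsThickTriSub (S : T → Prop) : Prop where
  zero : S 0
  iso_closed : ∀ {A B : T}, (A ≅ B) → S A → S B
  shift_closed : ∀ (M : T) (n : ℤ), S M → S (M⟦n⟧)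
  ext_closed : ∀ ⦃A B M : T⦄ (f : A ⟶ B) (g : B ⟶ M) (h : M ⟶ A⟦(1 : ℤ)⟧),
    (Triangle.mk f g h ∈ distTriang T) →
    S A → S B → S M
  summand_closed : ∀ {A M : T} (i : A ⟶ M) (p : M ⟶ A), i ≫ p = 𝟙 A → S M → S A

/-- Membership in `Thick(X)`, the smallest thick triangulated subcategory containing `X`. -/
def triThickClosure (X : T → Prop) (M : T) : Prop :=
  ∀ S : T → Prop, IsThickTriSub S → (∀ N, X N → S N) → S M

section

open ObjectProperty

instance isStableUnderRetracts_inf {C : Type*} [Category* C] (P Q : ObjectProperty C)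
    [P.IsStableUnderRetracts] [Q.IsStableUnderRetracts] : (P ⊓ Q).IsStableUnderRetracts where
  of_retract r hM := ⟨P.prop_of_retract r hM.1, Q.prop_of_retract r hM.2⟩

section Shift

variable {C : Type*} [Category* C] [HasShift C ℤ] (P : ObjectProperty C)

instance isStableUnderRetracts_shift [P.IsStableUnderRetracts] (a : ℤ) :
    (P.shift a).IsStableUnderRetracts where
  of_retract r hM := P.prop_of_retract (r.map (shiftFunctor C a)) hM

instance isStableUnderRetracts_shiftClosure [P.IsStableUnderRetracts] :
    (P.shiftClosure ℤ).IsStableUnderRetracts where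
  of_retract r hM := by
    rw [shiftClosure_eq_iSup, prop_iSup_iff] at hM ⊢
    exact hM.imp fun a ha ↦ (P.shift a).prop_of_retract r ha

lemma shift_le_shiftClosure [P.IsClosedUnderIsomorphisms] (a : ℤ) :
    P.shift a ≤ P.shiftClosure ℤ := by
  rw [shiftClosure_eq_iSup]
  exact le_iSup (fun a : ℤ ↦ P.shift a) a

variable [P.IsClosedUnderIsomorphisms]

lemma shift_shift_eq_self {a b : ℤ} (h : a + b = 0) : (P.shift b).shift a = P :=
  (P.shift_shift a b 0 h).trans (P.shift_zero ℤ)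

lemma monotone_shift [P.IsStableUnderShiftBy (1 : ℤ)] : Monotone fun a : ℤ ↦ P.shift a :=
  monotone_int_of_le_succ fun a M hM ↦ by
    rw [← P.shift_shift a 1 (a + 1) rfl]
    exact P.le_shift (1 : ℤ) _ hM

variable [P.IsStableUnderShiftBy (-1 : ℤ)]

lemma antitone_shift : Antitone fun a : ℤ ↦ P.shift a :=
  antitone_int_of_succ_le fun a M hM ↦ by
    rw [← P.shift_shift (a + 1) (-1) a (by ring)]
    exact P.le_shift (-1) _ hM

lemma le_shift_of_nonpos {a : ℤ} (ha : a ≤ 0) : P ≤ P.shift a :=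
  (P.shift_zero ℤ).ge.trans (antitone_shift P ha)

lemma shiftClosure_iff_exists_shift_neg (M : C) :
    P.shiftClosure ℤ M ↔ ∃ n : ℕ, P.shift (-n : ℤ) M := by
  rw [shiftClosure_eq_iSup, prop_iSup_iff]
  refine ⟨fun ⟨a, hM⟩ ↦ ⟨a.natAbs, antitone_shift P ?_ M hM⟩, fun ⟨n, hM⟩ ↦ ⟨_, hM⟩⟩
  omega

end Shift

section ShiftTriangulated

variable (P : ObjectProperty T) [P.IsClosedUnderIsomorphisms] [P.IsTriangulatedClosed₂]

instance isTriangulatedClosed₂_shift (a : ℤ) : (P.shift a).IsTriangulatedClosed₂ :=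
  .mk' fun t ht h₁ h₃ ↦
    P.ext_of_isTriangulatedClosed₂ _ (Triangle.shift_distinguished t ht a) h₁ h₃

instance isTriangulated_shiftClosure [P.ContainsZero] [P.IsStableUnderShiftBy (-1 : ℤ)] :
    (P.shiftClosure ℤ).IsTriangulated where
  exists_zero := ⟨0, isZero_zero T, P.le_shiftClosure _ P.prop_zero⟩
  toIsTriangulatedClosed₂ := .mk' fun t ht h₁ h₃ ↦ by
    rw [shiftClosure_eq_iSup, prop_iSup_iff] at h₁ h₃ ⊢
    obtain ⟨a, ha⟩ := h₁
    obtain ⟨b, hb⟩ := h₃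
    exact ⟨min a b, (P.shift (min a b)).ext_of_isTriangulatedClosed₂ t ht
      (antitone_shift P (min_le_left a b) _ ha) (antitone_shift P (min_le_right a b) _ hb)⟩

end ShiftTriangulated

section Orthogonal

variable {C : Type*} [Category* C]

instance isStableUnderRetracts_rightOrthogonal [HasZeroMorphisms C] (P : ObjectProperty C) :
    P.rightOrthogonal.IsStableUnderRetracts where
  of_retract r hM N f hN := by
    rw [← cancel_mono r.i, zero_comp]
    exact hM _ hN

variable [HasShift C ℤ] [Preadditive C] [∀ n : ℤ, (shiftFunctor C n).Additive]
  (P : ObjectProperty C)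

lemma rightOrthogonal_shift_le (a : ℤ) :
    P.rightOrthogonal.shift a ≤ (P.shift a).rightOrthogonal :=
  fun _ hM _ _ hN ↦ (shiftFunctor C a).map_injective ((hM _ hN).trans (Functor.map_zero _ _ _).symm)

instance isStableUnderShiftBy_one_rightOrthogonal [P.IsStableUnderShiftBy (-1 : ℤ)] :
    P.rightOrthogonal.IsStableUnderShiftBy (1 : ℤ) where
  le_shift M hM := by
    have hM' : (P.rightOrthogonal.shift (-1 : ℤ)).shift (1 : ℤ) M :=
      (shift_shift_eq_self P.rightOrthogonal (by simp)).ge M hM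
    exact fun _ f hN ↦ rightOrthogonal_shift_le P (-1) _ hM' f (P.le_shift (-1) _ hN)

lemma shift_neg_succ_le_rightOrthogonal [P.IsStableUnderShiftBy (-1 : ℤ)] {Q : ObjectProperty C}
    (hQ : Q ≤ P.rightOrthogonal.shift (1 : ℤ)) (n : ℕ) :
    Q.shift (-(n + 1 : ℕ) : ℤ) ≤ P.rightOrthogonal := by
  calc Q.shift (-(n + 1 : ℕ) : ℤ)
      ≤ (P.rightOrthogonal.shift (1 : ℤ)).shift (-(n + 1 : ℕ) : ℤ) := fun M hM ↦ hQ _ hM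
    _ = P.rightOrthogonal.shift (-n : ℤ) :=
      P.rightOrthogonal.shift_shift _ _ _ (by push_cast; ring)
    _ ≤ P.rightOrthogonal.shift (0 : ℤ) := monotone_shift _ (by omega)
    _ = P.rightOrthogonal := P.rightOrthogonal.shift_zero ℤ

end Orthogonal

section OrthogonalTriangulated

variable (P Q : ObjectProperty T)

variable {P} in
lemma rightOrthogonal_obj₃_iff_of_distinguished {t : Triangle T} (ht : t ∈ distTriang T) :
    P.rightOrthogonal t.obj₃ ↔ ∀ N, P N →
      Function.Surjective (fun x : N ⟶ t.obj₁ ↦ x ≫ t.mor₁) ∧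
      Function.Injective (fun x : N ⟶ t.obj₁⟦(1 : ℤ)⟧ ↦ x ≫ t.mor₁⟦(1 : ℤ)⟧') := by
  refine ⟨fun hZ N hN ↦ ⟨fun x ↦ ?_, fun x y hxy ↦ ?_⟩, fun H N z hN ↦ ?_⟩
  · obtain ⟨y, hy⟩ := t.coyoneda_exact₂ ht x (hZ _ hN)
    exact ⟨y, hy.symm⟩
  · obtain ⟨z, hz⟩ := t.coyoneda_exact₁ ht (x - y)
      (by rw [Preadditive.sub_comp, sub_eq_zero]; exact hxy)
    rw [← sub_eq_zero, hz, hZ z hN, zero_comp]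
  · obtain ⟨hsurj, hinj⟩ := H N hN
    have hz : z ≫ t.mor₃ = 0 := hinj <| by
      simp only [Category.assoc, comp_distTriang_mor_zero₃₁ _ ht, comp_zero, zero_comp]
    obtain ⟨y, rfl⟩ := t.coyoneda_exact₃ ht z hz
    obtain ⟨x, rfl⟩ := hsurj y
    simp only [Category.assoc, comp_distTriang_mor_zero₁₂ _ ht, comp_zero]

lemma trW_rightOrthogonal_iff {A B : T} (f : A ⟶ B) :
    P.rightOrthogonal.trW f ↔ ∀ N, P N →
      Function.Surjective (fun x : N ⟶ A ↦ x ≫ f) ∧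
      Function.Injective (fun x : N ⟶ A⟦(1 : ℤ)⟧ ↦ x ≫ f⟦(1 : ℤ)⟧') := by
  obtain ⟨Z, g, h, ht⟩ := distinguished_cocone_triangle f
  exact (P.rightOrthogonal.trW_iff_of_distinguished _ ht).trans
    (rightOrthogonal_obj₃_iff_of_distinguished ht)

instance isStableUnderComposition_trW_rightOrthogonal :
    P.rightOrthogonal.trW.IsStableUnderComposition where
  comp_mem f g hf hg := by
    rw [trW_rightOrthogonal_iff] at hf hg ⊢
    intro N hN
    simp only [Functor.map_comp, ← Category.assoc]
    exact ⟨(hg N hN).1.comp (hf N hN).1, (hg N hN).2.comp (hf N hN).2⟩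

lemma extensionProduct_extensionProduct_rightOrthogonal_le :
    extensionProduct (extensionProduct P Q.rightOrthogonal) Q.rightOrthogonal ≤
      extensionProduct P Q.rightOrthogonal := by
  rintro M ⟨L, Z, f, g, h, ht, ⟨K, Z', f', g', h', ht', hK, hZ'⟩, hZ⟩
  obtain ⟨Z'', g'', h'', ht'', hZ''⟩ := (Q.rightOrthogonal.trW_iff (f' ≫ f)).1 <|
    Q.rightOrthogonal.trW.comp_mem _ _ (.mk _ ht' hZ') (.mk _ ht hZ)
  exact ⟨K, Z'', _, g'', h'', ht'', hK, hZ''⟩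

end OrthogonalTriangulated

section ExtensionProduct

variable (P Q : ObjectProperty T)

lemma shift_extensionProduct_le [P.IsClosedUnderIsomorphisms] [Q.IsClosedUnderIsomorphisms]
    (a : ℤ) : (extensionProduct P Q).shift a ≤ extensionProduct (P.shift a) (Q.shift a) := by
  rintro M ⟨K, L, f, g, h, ht, hK, hL⟩
  have e : (M⟦a⟧)⟦-a⟧ ≅ M := (shiftEquiv T a).unitIso.symm.app M
  exact prop_of_iso _ e ⟨_, _, _, _, _, Triangle.shift_distinguished _ ht (-a),
    P.prop_of_iso ((shiftEquiv T a).counitIso.symm.app K) hK,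
    Q.prop_of_iso ((shiftEquiv T a).counitIso.symm.app L) hL⟩

lemma extensionProduct_inf_rightOrthogonal_le [Q.IsStableUnderRetracts] :
    extensionProduct P Q ⊓ P.rightOrthogonal ≤ Q := by
  rintro M ⟨⟨K, L, f, g, h, ht, hK, hL⟩, hM⟩
  obtain ⟨p, hp⟩ := Triangle.yoneda_exact₂ _ ht (𝟙 M) (hM _ hK)
  exact Q.prop_of_retract ⟨g, p, hp.symm⟩ hL

lemma extensionProduct_shift_neg_one_iff [Q.IsClosedUnderIsomorphisms] (M : T) :
    extensionProduct P (Q.shift (-1 : ℤ)) M ↔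
      ∃ (K E : T) (f : K ⟶ E) (g : E ⟶ M) (h : M ⟶ K⟦(1 : ℤ)⟧),
        Triangle.mk f g h ∈ distTriang T ∧ P E ∧ Q K := by
  constructor
  · rintro ⟨E, Z, g, k, l, ht, hE, hZ⟩
    exact ⟨_, E, _, g, _, inv_rot_of_distTriang _ ht, hE, hZ⟩
  · rintro ⟨K, E, f, g, h, ht, hE, hK⟩
    exact ⟨E, _, g, h, _, rot_of_distTriang _ ht, hE,
      Q.prop_of_iso ((shiftEquiv T (1 : ℤ)).unitIso.app K) hK⟩

lemma exists_distTriang_of_extensionProduct_shift_one [P.IsClosedUnderIsomorphisms]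
    [Q.IsClosedUnderIsomorphisms] {M : T}
    (hM : extensionProduct P (Q.shift (-1 : ℤ)) (M⟦(1 : ℤ)⟧)) :
    ∃ (Y E : T) (f : M ⟶ Y) (g : Y ⟶ E) (h : E ⟶ M⟦(1 : ℤ)⟧),
      Triangle.mk f g h ∈ distTriang T ∧ P E ∧ Q Y := by
  obtain ⟨E, Z, h, k, l, ht, hE, hZ⟩ := hM
  obtain ⟨Y, f, g, ht'⟩ := distinguished_cocone_triangle₂ h
  have hY : Q.shift (-1 : ℤ) (Y⟦(1 : ℤ)⟧) :=
    ((Q.shift (-1 : ℤ)).trW_iff_of_distinguished _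
      (rot_of_distTriang _ (rot_of_distTriang _ ht'))).1 ⟨_, _, _, ht, hZ⟩
  exact ⟨Y, E, f, g, h, ht', hE, Q.prop_of_iso (shiftShiftNeg Y (1 : ℤ)) hY⟩

end ExtensionProduct

section TriHat

variable (P : ObjectProperty T)

lemma triHat_succ (n : ℕ) [ObjectProperty.IsClosedUnderIsomorphisms (TriHat P n)] :
    TriHat P (n + 1) = extensionProduct P (ObjectProperty.shift (TriHat P n) (-1 : ℤ)) := by
  ext M
  exact (extensionProduct_shift_neg_one_iff P (TriHat P n) M).symm

variable [P.IsClosedUnderIsomorphisms]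

instance isClosedUnderIsomorphisms_triHat (n : ℕ) :
    ObjectProperty.IsClosedUnderIsomorphisms (TriHat P n) := by
  induction n with
  | zero => assumption
  | succ n _ => rw [triHat_succ]; infer_instance

variable [P.ContainsZero] [P.IsTriangulatedClosed₂] [P.IsStableUnderShiftBy (-1 : ℤ)]

lemma triHat_eq_shift (n : ℕ) : TriHat P n = P.shift (-n : ℤ) := by
  induction n with
  | zero => exact (P.shift_zero ℤ).symm
  | succ n ih =>
    have hshift : (P.shift (-n : ℤ)).shift (-1 : ℤ) = P.shift (-(n + 1 : ℕ) : ℤ) :=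
      P.shift_shift _ _ _ (by push_cast; ring)
    rw [triHat_succ, ih, hshift]
    exact (extensionProduct_le_of_isTriangulatedClosed₂
      (le_shift_of_nonpos P (by omega)) le_rfl).antisymm (le_extensionProduct_right P)

lemma triHatAll_eq_shiftClosure : TriHatAll P = P.shiftClosure ℤ := by
  ext M
  rw [shiftClosure_iff_exists_shift_neg]
  exact exists_congr fun n ↦ by rw [triHat_eq_shift]

end TriHat

section Thick

lemma isThickTriSub_of_isTriangulated (S : ObjectProperty T) [S.IsTriangulated]
    [S.IsStableUnderRetracts] : IsThickTriSub S where
  zero := S.prop_zero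
  iso_closed := S.prop_of_iso
  shift_closed M n := S.le_shift n M
  ext_closed _ _ _ _ _ _ ht := S.ext_of_isTriangulatedClosed₃ _ ht
  summand_closed i p hip := S.prop_of_retract ⟨i, p, hip⟩

lemma triHatAll_le_triThickClosure (P : ObjectProperty T) :
    TriHatAll P ≤ triThickClosure P := by
  rintro M ⟨n, hM⟩ S hS hPS
  induction n generalizing M with
  | zero => exact hPS M hM
  | succ n ih =>
    obtain ⟨K, E, f, g, h, ht, hE, hK⟩ := hM
    exact hS.ext_closed f g h ht (ih K hK) (hPS E hE)

lemma triThickClosure_eq_shiftClosure (P : ObjectProperty T) [P.IsStableUnderRetracts]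
    [P.ContainsZero] [P.IsTriangulatedClosed₂] [P.IsStableUnderShiftBy (-1 : ℤ)] :
    triThickClosure P = P.shiftClosure ℤ :=
  le_antisymm
    (fun _ hM ↦ hM _ (isThickTriSub_of_isTriangulated (P.shiftClosure ℤ)) P.le_shiftClosure)
    ((triHatAll_eq_shiftClosure P).ge.trans (triHatAll_le_triThickClosure P))

end Thick

section Approximation

variable {X W : ObjectProperty T} [W.IsStableUnderRetracts]

lemma inf_shift_one_rightOrthogonal_le (hcogen : X ≤ extensionProduct (X.shift (1 : ℤ)) W) :
    X ⊓ X.rightOrthogonal.shift (1 : ℤ) ≤ W :=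
  (inf_le_inf hcogen (rightOrthogonal_shift_le X 1)).trans
    (extensionProduct_inf_rightOrthogonal_le _ _)

variable [X.IsClosedUnderIsomorphisms] [X.IsStableUnderShiftBy (-1 : ℤ)]

lemma shift_neg_le_extensionProduct (hcogen : X ≤ extensionProduct (X.shift (1 : ℤ)) W)
    (hperp : W ≤ X.rightOrthogonal.shift (1 : ℤ)) (n : ℕ) :
    X.shift (-n : ℤ) ≤ extensionProduct X X.rightOrthogonal := by
  induction n with
  | zero => exact (X.shift_zero ℤ).le.trans (le_extensionProduct_left _)
  | succ n ih =>
    calc X.shift (-(n + 1 : ℕ) : ℤ)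
        ≤ (extensionProduct (X.shift (1 : ℤ)) W).shift (-(n + 1 : ℕ) : ℤ) :=
          fun M hM ↦ hcogen _ hM
      _ ≤ extensionProduct ((X.shift (1 : ℤ)).shift (-(n + 1 : ℕ) : ℤ))
            (W.shift (-(n + 1 : ℕ) : ℤ)) := shift_extensionProduct_le _ _ _
      _ = extensionProduct (X.shift (-n : ℤ)) (W.shift (-(n + 1 : ℕ) : ℤ)) := by
          rw [X.shift_shift _ _ (-n : ℤ) (by push_cast; ring)]
      _ ≤ extensionProduct (extensionProduct X X.rightOrthogonal) X.rightOrthogonal :=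
          (monotone_extensionProduct_left _ ih).trans
            (monotone_extensionProduct_right _ (shift_neg_succ_le_rightOrthogonal X hperp n))
      _ ≤ extensionProduct X X.rightOrthogonal :=
          extensionProduct_extensionProduct_rightOrthogonal_le X X

lemma shiftClosure_le_extensionProduct_rightOrthogonal
    (hcogen : X ≤ extensionProduct (X.shift (1 : ℤ)) W)
    (hperp : W ≤ X.rightOrthogonal.shift (1 : ℤ)) :
    X.shiftClosure ℤ ≤ extensionProduct X X.rightOrthogonal := by
  intro M hM
  obtain ⟨n, hn⟩ := (shiftClosure_iff_exists_shift_neg X M).1 hM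
  exact shift_neg_le_extensionProduct hcogen hperp n M hn

variable [X.IsTriangulatedClosed₂]

lemma shift_inf_shift_one_rightOrthogonal_le_extensionProduct
    (hcogen : X ≤ extensionProduct (X.shift (1 : ℤ)) W)
    (hperp : W ≤ X.rightOrthogonal.shift (1 : ℤ)) {a : ℤ} (ha : a < 0) :
    X.shift a ⊓ X.rightOrthogonal.shift (1 : ℤ) ≤
      extensionProduct W (X.shift a ⊓ X.rightOrthogonal) := by
  rintro Y ⟨hYX, hYO⟩
  obtain ⟨E, Z, f, g, h, ht, hE, hZ⟩ :=
    shiftClosure_le_extensionProduct_rightOrthogonal hcogen hperp Y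
      (shift_le_shiftClosure X a Y hYX)
  have hEO : X.rightOrthogonal.shift (1 : ℤ) E :=
    ext_of_isTriangulatedClosed₂ _ _ (inv_rot_of_distTriang _ ht)
      (X.rightOrthogonal.prop_of_iso (shiftNegShift Z (1 : ℤ)).symm hZ) hYO
  have hEX : (X.shift a).shift (1 : ℤ) E := by
    rw [X.shift_shift (1 : ℤ) a _ rfl]
    exact le_shift_of_nonpos X (by omega) E hE
  have hZX : X.shift a Z :=
    ext_of_isTriangulatedClosed₂ _ _ (rot_of_distTriang _ ht) hYX hEX
  exact ⟨E, Z, f, g, h, ht, inf_shift_one_rightOrthogonal_le hcogen E ⟨hE, hEO⟩, hZX, hZ⟩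

lemma triHat_eq_shift_inf (hWX : W ≤ X) (hcogen : X ≤ extensionProduct (X.shift (1 : ℤ)) W)
    (hperp : W ≤ X.rightOrthogonal.shift (1 : ℤ)) (n : ℕ) :
    TriHat W n = X.shift (-n : ℤ) ⊓ X.rightOrthogonal.shift (1 : ℤ) := by
  induction n with
  | zero =>
    have hX : X.shift (-(0 : ℕ) : ℤ) = X := X.shift_zero ℤ
    rw [hX]
    exact (le_inf hWX hperp).antisymm (inf_shift_one_rightOrthogonal_le hcogen)
  | succ n ih =>
    have hshift : (X.shift (-n : ℤ) ⊓ X.rightOrthogonal.shift (1 : ℤ)).shift (-1 : ℤ) =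
        X.shift (-(n + 1 : ℕ) : ℤ) ⊓ X.rightOrthogonal :=
      congrArg₂ (· ⊓ ·) (X.shift_shift _ _ _ (by push_cast; ring))
        (shift_shift_eq_self X.rightOrthogonal (by simp))
    rw [triHat_succ, ih, hshift]
    refine le_antisymm (le_inf ?_ ?_)
      (shift_inf_shift_one_rightOrthogonal_le_extensionProduct hcogen hperp (by omega))
    · exact extensionProduct_le_of_isTriangulatedClosed₂
        (hWX.trans (le_shift_of_nonpos X (by omega))) inf_le_left
    · exact extensionProduct_le_of_isTriangulatedClosed₂ hperp
        (inf_le_right.trans (X.rightOrthogonal.le_shift 1))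

lemma triHatAll_eq_shiftClosure_inf (hWX : W ≤ X)
    (hcogen : X ≤ extensionProduct (X.shift (1 : ℤ)) W)
    (hperp : W ≤ X.rightOrthogonal.shift (1 : ℤ)) :
    TriHatAll W = X.shiftClosure ℤ ⊓ X.rightOrthogonal.shift (1 : ℤ) := by
  ext M
  simp only [TriHatAll, triHat_eq_shift_inf hWX hcogen hperp]
  exact exists_and_right.trans (and_congr_left' (shiftClosure_iff_exists_shift_neg X M).symm)

variable [X.ContainsZero]

lemma shiftClosure_le_extensionProduct_shift_triHatAll (hWX : W ≤ X)
    (hcogen : X ≤ extensionProduct (X.shift (1 : ℤ)) W)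
    (hperp : W ≤ X.rightOrthogonal.shift (1 : ℤ)) :
    X.shiftClosure ℤ ≤
      extensionProduct X (ObjectProperty.shift (TriHatAll W) (-1 : ℤ)) := by
  intro M hM
  obtain ⟨E, Z, f, g, h, ht, hE, hZ⟩ :=
    shiftClosure_le_extensionProduct_rightOrthogonal hcogen hperp M hM
  have hZX : X.shiftClosure ℤ Z :=
    ext_of_isTriangulatedClosed₃ _ _ ht (X.le_shiftClosure _ hE) hM
  refine ⟨E, Z, f, g, h, ht, hE, ?_⟩
  rw [triHatAll_eq_shiftClosure_inf hWX hcogen hperp]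
  exact ⟨(X.shiftClosure ℤ).le_shift (-1 : ℤ) Z hZX,
    X.rightOrthogonal.prop_of_iso (shiftNegShift Z (1 : ℤ)).symm hZ⟩

end Approximation

section Subcat

variable {C : Type*} [Category* C] [HasZeroObject C] {X : ObjectProperty C}

lemma IsTriSubcat.isStableUnderRetracts (hX : IsTriSubcat X) : X.IsStableUnderRetracts where
  of_retract r hM := hX.summand_closed r.i r.r r.retract hM

lemma IsTriSubcat.containsZero (hX : IsTriSubcat X) : X.ContainsZero where
  exists_zero := ⟨0, isZero_zero C, hX.zero⟩

end Subcat

section Frobenius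

variable {X W : ObjectProperty T}

lemma TriLeftFrobenius.isTriangulatedClosed₂ (hF : TriLeftFrobenius X W) :
    X.IsTriangulatedClosed₂ :=
  have := hF.subX.isStableUnderRetracts
  .mk' fun t ht ↦ hF.extClosed t.mor₁ t.mor₂ t.mor₃ ht

lemma TriLeftFrobenius.isStableUnderShiftBy_neg_one (hF : TriLeftFrobenius X W) :
    X.IsStableUnderShiftBy (-1 : ℤ) where
  le_shift M hM := hF.coconeClosed _ _ _ (contractible_distinguished₂ (M⟦(-1 : ℤ)⟧))
    hF.subX.zero (hF.subX.iso_closed (shiftNegShift M (1 : ℤ)).symm hM)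

lemma TriLeftFrobenius.le_extensionProduct_shift_one (hF : TriLeftFrobenius X W) :
    X ≤ extensionProduct (X.shift (1 : ℤ)) W := by
  intro M hM
  obtain ⟨W₀, X', f, g, h, ht, hW₀, hX'⟩ := hF.cogen M hM
  exact ⟨_, _, _, _, _, inv_rot_of_distTriang _ ht,
    hF.subX.iso_closed (shiftNegShift X' (1 : ℤ)).symm hX', hW₀⟩

lemma TriLeftFrobenius.le_shift_one_rightOrthogonal (hF : TriLeftFrobenius X W) :
    W ≤ X.rightOrthogonal.shift (1 : ℤ) :=
  fun _ hN _ f hM ↦ hF.perp _ _ hM hN 1 le_rfl f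

end Frobenius

end

/-- For a left Frobenius pair `(X, W)` in a triangulated category `T`,
`(X, Ŵ)` is a co-t-structure on the thick subcategory `Thick(X) = X̂`: both classes are
closed under direct summands, `X[-1] ⊆ X`, `Hom(X, Ŵ[1]) = 0`, and every `C ∈ X̂` admits
approximation triangles `Y → X' → C → Y[1]` and `C → Y' → X'' → C[1]` with `X', X'' ∈ X`,
`Y, Y' ∈ Ŵ`. -/
theorem statement17 {T : Type u} [Category.{v} T] [HasZeroObject T] [HasShift T ℤ]
    [Preadditive T] [∀ n : ℤ, (shiftFunctor T n).Additive] [Pretriangulated T]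
    (X W : T → Prop) (hF : TriLeftFrobenius X W) :
    (∀ {A M : T} (i : A ⟶ M) (p : M ⟶ A), i ≫ p = 𝟙 A → X M → X A) ∧
    (∀ {A M : T} (i : A ⟶ M) (p : M ⟶ A), i ≫ p = 𝟙 A → TriHatAll W M → TriHatAll W A) ∧
    (∀ M : T, X M → X (M⟦(-1 : ℤ)⟧)) ∧
    (∀ (M N : T) (f : M ⟶ N⟦(1 : ℤ)⟧), X M → TriHatAll W N → f = 0) ∧
    (∀ M : T, TriHatAll X M →
      ∃ (Y X' : T) (f : Y ⟶ X') (g : X' ⟶ M) (h : M ⟶ Y⟦(1 : ℤ)⟧),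
        (Triangle.mk f g h ∈ distTriang T) ∧ X X' ∧ TriHatAll W Y) ∧
    (∀ M : T, TriHatAll X M →
      ∃ (Y X' : T) (f : M ⟶ Y) (g : Y ⟶ X') (h : X' ⟶ M⟦(1 : ℤ)⟧),
        (Triangle.mk f g h ∈ distTriang T) ∧ X X' ∧ TriHatAll W Y) ∧
    (∀ M, triThickClosure X M ↔ TriHatAll X M) := by
  have := hF.subX.isStableUnderRetracts
  have := hF.subX.containsZero
  have := hF.subW.isStableUnderRetracts
  have := hF.isTriangulatedClosed₂
  have := hF.isStableUnderShiftBy_neg_one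
  have hcogen := hF.le_extensionProduct_shift_one
  have hperp := hF.le_shift_one_rightOrthogonal
  have hW := triHatAll_eq_shiftClosure_inf hF.WsubX hcogen hperp
  have hWretract : ObjectProperty.IsStableUnderRetracts (TriHatAll W) := by
    rw [hW]; infer_instance
  have approx := shiftClosure_le_extensionProduct_shift_triHatAll hF.WsubX hcogen hperp
  rw [triThickClosure_eq_shiftClosure X, triHatAll_eq_shiftClosure X]
  refine ⟨hF.subX.summand_closed,
    fun i p hip ↦ ObjectProperty.prop_of_retract _ ⟨i, p, hip⟩,
    fun M ↦ ObjectProperty.le_shift X (-1 : ℤ) M,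
    fun M N f hM hN ↦ (hW.le N hN).2 f hM,
    fun M hM ↦ (extensionProduct_shift_neg_one_iff _ _ M).1 (approx M hM),
    fun M hM ↦ exists_distTriang_of_extensionProduct_shift_one _ _
      (approx _ (ObjectProperty.le_shift _ (1 : ℤ) M hM)),
    fun M ↦ Iff.rfl⟩

end FrobeniusPaperTri
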